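/- The composite of two contractions between nested graphs is a contraction: if κ₁ : N₁ ⥤ N₂ and κ₂ : N₂ ⥤ N₃ are contractions, then κ₂ ∘ κ₁ is a contraction. -/

import Mathlib

open CategoryTheory

universe v u

/-- A morphism in a category is an identity morphism (up to `eqToHom`). -/
def IsId {C : Type u} [Category.{v} C] {A B : C} (f : A ⟶ B) : Prop :=
  ∃ h : A = B, f = eqToHom h

/-- A flag in a nested graph is a non-identity morphism. -/
def IsFlag {C : Type u} [Category.{v} C] {A B : C} (f : A ⟶ B) : Prop :=
  ¬ IsId f

/-- An irreducible flag is a flag that cannot be written as the composite of two flags. -/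
def IsIrred {C : Type u} [Category.{v} C] {A B : C} (f : A ⟶ B) : Prop :=
  IsFlag f ∧ ¬ ∃ (X : C) (g : A ⟶ X) (h : X ⟶ B), IsFlag g ∧ IsFlag h ∧ g ≫ h = f

/-- A grading: a functor to the finite ordinal `Fin n` (viewed as a preorder category)
sending every non-identity morphism to a non-identity morphism. -/
def IsGrading {C : Type u} [Category.{v} C] {n : ℕ} (G : C ⥤ Fin n) : Prop :=
  ∀ ⦃A B : C⦄ (f : A ⟶ B), IsFlag f → IsFlag (G.map f)

/-- A nested graph: a category admitting a grading into some finite ordinal. -/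
def IsNestedGraph (C : Type u) [Category.{v} C] : Prop :=
  ∃ (n : ℕ) (G : C ⥤ Fin n), IsGrading G

/-- A functor `φ` contracts a flag `f` if `φ.map f` is an identity. -/
def Contracts {C D : Type u} [Category.{v} C] [Category.{v} D]
    (φ : C ⥤ D) {A B : C} (f : A ⟶ B) : Prop :=
  IsId (φ.map f)

/-- An admissible functor: it maps irreducible flags to identities or irreducible flags,
and whenever it contracts an irreducible flag with domain `A`, it contracts every
irreducible flag with domain `A`. -/
def IsAdmissible {C D : Type u} [Category.{v} C] [Category.{v} D] (φ : C ⥤ D) : Prop :=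
  (∀ ⦃A B : C⦄ (f : A ⟶ B), IsIrred f → IsId (φ.map f) ∨ IsIrred (φ.map f)) ∧
  (∀ ⦃A B B' : C⦄ (f : A ⟶ B) (g : A ⟶ B'), IsIrred f → IsIrred g →
      Contracts φ f → Contracts φ g)

/-- The morphisms of the codomain generated by the image of a functor. -/
inductive GenBy {C D : Type u} [Category.{v} C] [Category.{v} D] (φ : C ⥤ D) :
    ∀ {X Y : D}, (X ⟶ Y) → Prop
  | id (X : D) : GenBy φ (𝟙 X)
  | map {A B : C} (f : A ⟶ B) : GenBy φ (φ.map f)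
  | comp {X Y Z : D} (f : X ⟶ Y) (g : Y ⟶ Z) :
      GenBy φ f → GenBy φ g → GenBy φ (f ≫ g)

/-- An epi-functor: its image generates the codomain. -/
def IsEpiFunctor {C D : Type u} [Category.{v} C] [Category.{v} D] (φ : C ⥤ D) : Prop :=
  Function.Surjective φ.obj ∧ ∀ ⦃X Y : D⦄ (f : X ⟶ Y), GenBy φ f

/-- `μ : C ⥤ D` exhibits `D` as the quotient of `C` identifying `r`-related objects,
with morphisms freely generated by the morphisms of `C` subject to the composition
relations of `C` (expressed via the universal property). -/
def IsQuotientBy {C D : Type u} [Category.{v} C] [Category.{v} D]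
    (r : C → C → Prop) (μ : C ⥤ D) : Prop :=
  (∀ A B : C, μ.obj A = μ.obj B ↔ Relation.EqvGen r A B) ∧
  Function.Surjective μ.obj ∧
  (∀ ⦃X Y : D⦄ (f : X ⟶ Y), GenBy μ f) ∧
  (∀ (E : Type u) [Category.{v} E] (F : C ⥤ E),
      (∀ A B : C, r A B → F.obj A = F.obj B) → ∃! F' : D ⥤ E, μ ⋙ F' = F)

/-- A merger: an admissible epi-functor exhibiting its codomain as the quotient of its
domain by an equivalence relation on objects, with morphisms freely generated subject to
the composition relations of the domain. -/
def IsMerger {C D : Type u} [Category.{v} C] [Category.{v} D] (μ : C ⥤ D) : Prop :=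
  IsAdmissible μ ∧ IsEpiFunctor μ ∧
    ∃ r : C → C → Prop, Equivalence r ∧ IsQuotientBy r μ

/-- `A` is a vertex of its fiber under `φ`: it is not the domain of any flag
contracted by `φ`. -/
def IsVertexOver {C D : Type u} [Category.{v} C] [Category.{v} D]
    (φ : C ⥤ D) (A : C) : Prop :=
  ∀ ⦃B : C⦄ (f : A ⟶ B), Contracts φ f → IsId f

/-- `A₁` is a vertex of the fiber of `φ` over `A₂`. -/
def IsFiberVertex {C D : Type u} [Category.{v} C] [Category.{v} D]
    (φ : C ⥤ D) (A₂ : D) (A₁ : C) : Prop :=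
  φ.obj A₁ = A₂ ∧ IsVertexOver φ A₁

/-- A contraction: an admissible epi-functor each of whose fibers is a corolla,
i.e. has a unique vertex. -/
def IsContraction {C D : Type u} [Category.{v} C] [Category.{v} D] (κ : C ⥤ D) : Prop :=
  IsAdmissible κ ∧ IsEpiFunctor κ ∧ ∀ A₂ : D, ∃! A₁ : C, IsFiberVertex κ A₂ A₁

/-- The canonical merger relation of `φ`: it relates distinct objects `A ≠ B` exactly when
`φ A = φ B` and both `A` and `B` are vertices of the fiber of `φ` over `φ A`. -/
def mergerRel {C D : Type u} [Category.{v} C] [Category.{v} D] (φ : C ⥤ D) :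
    C → C → Prop :=
  fun A B => A ≠ B ∧ φ.obj A = φ.obj B ∧ IsVertexOver φ A ∧ IsVertexOver φ B

/-- A canonical merger–contraction decomposition of `φ`: the merger part is the quotient
of the domain identifying, within each fiber of `φ`, all objects that are vertices of that
fiber. -/
def IsCanonicalDecomp {C P D : Type u} [Category.{v} C] [Category.{v} P] [Category.{v} D]
    (φ : C ⥤ D) (μ : C ⥤ P) (κ : P ⥤ D) : Prop :=
  IsQuotientBy (mergerRel φ) μ ∧ μ ⋙ κ = φ

/-- Two merger–contraction pairs are equal as morphisms of nested graphs: one is obtained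
from the other by shifting an isomorphism from the merger to the contraction. -/
def PairEquiv {A B P P' : Type u} [Category.{v} A] [Category.{v} B]
    [Category.{v} P] [Category.{v} P']
    (μ : A ⥤ P) (κ : P ⥤ B) (μ' : A ⥤ P') (κ' : P' ⥤ B) : Prop :=
  ∃ (e : P ⥤ P') (e' : P' ⥤ P), e ⋙ e' = 𝟭 P ∧ e' ⋙ e = 𝟭 P' ∧
    μ ⋙ e = μ' ∧ e ⋙ κ' = κ

/-- A category contains no cycle of flags. -/
def NoFlagCycles (C : Type u) [Category.{v} C] : Prop :=
  ∀ (k : ℕ), 0 < k → ∀ (obj : Fin (k + 1) → C)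
    (flag : ∀ i : Fin k, obj i.castSucc ⟶ obj i.succ),
    (∀ i, IsFlag (flag i)) → obj 0 ≠ obj (Fin.last k)

section Identities

variable {C : Type u} [Category.{v} C]

theorem IsId.comp {X Y Z : C} {f : X ⟶ Y} {g : Y ⟶ Z} (hf : IsId f) (hg : IsId g) :
    IsId (f ≫ g) := by
  obtain ⟨rfl, rfl⟩ := hf
  obtain ⟨rfl, rfl⟩ := hg
  exact ⟨rfl, by simp⟩

theorem IsId.map {D : Type u} [Category.{v} D] (φ : C ⥤ D) {X Y : C} {f : X ⟶ Y}
    (hf : IsId f) : IsId (φ.map f) := by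
  obtain ⟨rfl, rfl⟩ := hf
  exact ⟨rfl, by simp⟩

/-- A nested graph has a bounded degree function that strictly increases along flags. -/
theorem IsNestedGraph.exists_degree (hC : IsNestedGraph C) :
    ∃ (n : ℕ) (deg : C → ℕ), (∀ A, deg A < n) ∧
      ∀ ⦃A B : C⦄ (f : A ⟶ B), IsFlag f → deg A < deg B := by
  obtain ⟨n, G, hG⟩ := hC
  refine ⟨n, fun A => (G.obj A).val, fun A => (G.obj A).isLt, fun A B f hf => ?_⟩
  refine lt_of_le_of_ne (leOfHom (G.map f)) fun h => hG f hf ?_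
  exact ⟨Fin.ext h, Subsingleton.elim _ _⟩

theorem IsNestedGraph.isId_of_comp (hC : IsNestedGraph C) {X Y Z : C} {f : X ⟶ Y}
    {g : Y ⟶ Z} (h : IsId (f ≫ g)) : IsId f ∧ IsId g := by
  obtain ⟨n, deg, -, hdeg⟩ := hC.exists_degree
  have mono : ∀ {A B : C} (k : A ⟶ B), deg A ≤ deg B := by
    intro A B k
    by_cases hk : IsId k
    · exact (congrArg deg hk.1).le
    · exact (hdeg k hk).le
  have hXZ : deg X = deg Z := congrArg deg h.1
  constructor
  · by_contra hf
    have := hdeg f hf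
    have := mono g
    omega
  · by_contra hg
    have := hdeg g hg
    have := mono f
    omega

/-- Every flag of a nested graph starts with an irreducible flag. -/
theorem IsNestedGraph.exists_irred_comp (hC : IsNestedGraph C) {A B : C} (f : A ⟶ B)
    (hf : IsFlag f) : ∃ (X : C) (p : A ⟶ X) (q : X ⟶ B), IsIrred p ∧ p ≫ q = f := by
  obtain ⟨n, deg, -, hdeg⟩ := hC.exists_degree
  induction hd : deg B using Nat.strong_induction_on generalizing B with
  | _ d ih =>
    by_cases hirr : IsIrred f
    · exact ⟨B, f, 𝟙 B, hirr, Category.comp_id f⟩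
    · obtain ⟨X, g, h, hg, hh, rfl⟩ := not_not.mp fun hn => hirr ⟨hf, hn⟩
      obtain ⟨Y, p, q, hp, rfl⟩ := ih (deg X) (hd ▸ hdeg h hh) g hg rfl
      exact ⟨Y, p, q ≫ h, hp, (Category.assoc p q h).symm⟩

end Identities

section Composition

variable {N₁ N₂ N₃ : Type u} [Category.{v} N₁] [Category.{v} N₂] [Category.{v} N₃]

theorem IsAdmissible.comp {φ : N₁ ⥤ N₂} {ψ : N₂ ⥤ N₃} (hφ : IsAdmissible φ)
    (hψ : IsAdmissible ψ) : IsAdmissible (φ ⋙ ψ) := by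
  constructor
  · intro A B f hf
    rcases hφ.1 f hf with h | h
    · exact Or.inl (h.map ψ)
    · exact hψ.1 _ h
  · intro A B B' f g hf hg hc
    rcases hφ.1 f hf with h | h
    · exact IsId.map ψ (hφ.2 f g hf hg h)
    · rcases hφ.1 g hg with h' | h'
      · exact h'.map ψ
      · exact hψ.2 _ _ h h' hc

theorem GenBy.map_comp {φ : N₁ ⥤ N₂} (ψ : N₂ ⥤ N₃) {X Y : N₂} {f : X ⟶ Y}
    (hf : GenBy φ f) : GenBy (φ ⋙ ψ) (ψ.map f) := by
  induction hf with
  | id X => simpa using GenBy.id (φ := φ ⋙ ψ) (ψ.obj X)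
  | map f => exact GenBy.map (φ := φ ⋙ ψ) f
  | comp f g _ _ ihf ihg => simpa using GenBy.comp _ _ ihf ihg

theorem IsEpiFunctor.comp {φ : N₁ ⥤ N₂} {ψ : N₂ ⥤ N₃} (hφ : IsEpiFunctor φ)
    (hψ : IsEpiFunctor ψ) : IsEpiFunctor (φ ⋙ ψ) := by
  refine ⟨hψ.1.comp hφ.1, fun X Y f => ?_⟩
  induction hψ.2 f with
  | id X => exact GenBy.id X
  | map f => exact (hφ.2 f).map_comp ψ
  | comp f g _ _ ihf ihg => exact GenBy.comp _ _ ihf ihg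

/-- A generated flag contracted by `ψ` has a first non-identity generator, which is again
contracted by `ψ`. -/
theorem GenBy.exists_flag_contracts (h₃ : IsNestedGraph N₃) {φ : N₁ ⥤ N₂} {ψ : N₂ ⥤ N₃}
    {X Y : N₂} {g : X ⟶ Y} (hgen : GenBy φ g) (hg : IsFlag g) (hc : Contracts ψ g) :
    ∃ (C D : N₁) (f : C ⟶ D), φ.obj C = X ∧ IsFlag (φ.map f) ∧ Contracts (φ ⋙ ψ) f := by
  induction hgen with
  | id X => exact absurd ⟨rfl, rfl⟩ hg
  | map f => exact ⟨_, _, f, rfl, hg, hc⟩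
  | comp f g _ _ ihf ihg =>
    have hfg : IsId (ψ.map f ≫ ψ.map g) := by
      rw [← ψ.map_comp]
      exact hc
    obtain ⟨hcf, hcg⟩ := h₃.isId_of_comp hfg
    by_cases hf : IsId f
    · obtain ⟨C, D, k, hC, hk⟩ := ihg (fun h => hg (hf.comp h)) hcg
      exact ⟨C, D, k, hC.trans hf.1.symm, hk⟩
    · exact ihf hf hcf

/-- A morphism out of a fiber of an admissible functor, not contracted by it, can be
shortened until it starts at a vertex of that fiber. -/
theorem IsAdmissible.exists_flag_contracts_of_vertex (h₁ : IsNestedGraph N₁)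
    (h₂ : IsNestedGraph N₂) (h₃ : IsNestedGraph N₃) {φ : N₁ ⥤ N₂} {ψ : N₂ ⥤ N₃}
    (hφ : IsAdmissible φ) {C D : N₁} (f : C ⟶ D) (hf : IsFlag (φ.map f))
    (hc : Contracts (φ ⋙ ψ) f) :
    ∃ (A : N₁) (k : A ⟶ D), IsFiberVertex φ (φ.obj C) A ∧ IsFlag (φ.map k) ∧
      Contracts (φ ⋙ ψ) k := by
  obtain ⟨n, deg, hn, hdeg⟩ := h₁.exists_degree
  induction hd : n - deg C using Nat.strong_induction_on generalizing C with
  | _ d ih =>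
    by_cases hC : IsVertexOver φ C
    · exact ⟨C, f, ⟨rfl, hC⟩, hf, hc⟩
    · simp only [IsVertexOver, not_forall] at hC
      obtain ⟨B, h, hch, hh⟩ := hC
      obtain ⟨X, p, q, hp, rfl⟩ := h₁.exists_irred_comp h hh
      have hpq : IsId (φ.map p ≫ φ.map q) := by
        rw [← φ.map_comp]
        exact hch
      obtain ⟨Y, r, s, hr, rfl⟩ := h₁.exists_irred_comp f fun h => hf (h.map φ)
      have hcr : IsId (φ.map r) := hφ.2 p r hp hr (h₂.isId_of_comp hpq).1
      have hrs : IsId ((φ ⋙ ψ).map r ≫ (φ ⋙ ψ).map s) := by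
        rw [← (φ ⋙ ψ).map_comp]
        exact hc
      have hs : IsFlag (φ.map s) := fun hs => hf <| by
        rw [φ.map_comp]
        exact hcr.comp hs
      have hlt : n - deg Y < d := by
        have := hdeg r hr.1
        have := hn Y
        omega
      obtain ⟨A, k, hA, hk⟩ := ih _ hlt s hs (h₃.isId_of_comp hrs).2 rfl
      exact ⟨A, k, ⟨hA.1.trans hcr.1.symm, hA.2⟩, hk⟩

/-- A contraction sends vertices of the fibers of a composite to vertices of the fibers
of the second functor. -/
theorem IsContraction.isVertexOver_obj (h₁ : IsNestedGraph N₁) (h₂ : IsNestedGraph N₂)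
    (h₃ : IsNestedGraph N₃) {κ : N₁ ⥤ N₂} {ψ : N₂ ⥤ N₃} (hκ : IsContraction κ) {A : N₁}
    (hA : IsVertexOver (κ ⋙ ψ) A) : IsVertexOver ψ (κ.obj A) := by
  intro B g hg
  by_contra hflag
  obtain ⟨C, D, f, hC, hf, hcf⟩ := (hκ.2.1.2 g).exists_flag_contracts h₃ hflag hg
  obtain ⟨A', k, hA', hk, hck⟩ :=
    hκ.1.exists_flag_contracts_of_vertex h₁ h₂ h₃ f hf hcf
  rw [hC] at hA'
  have hAκ : IsFiberVertex κ (κ.obj A) A := ⟨rfl, fun _ f hf => hA f (IsId.map ψ hf)⟩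
  obtain rfl := (hκ.2.2 (κ.obj A)).unique hA' hAκ
  exact hk ((hA k hck).map κ)

end Composition

/-- the composite of two contractions between nested graphs is a
contraction. -/
theorem contraction_comp {N₁ N₂ N₃ : Type u}
    [Category.{v} N₁] [Category.{v} N₂] [Category.{v} N₃]
    (h₁ : IsNestedGraph N₁) (h₂ : IsNestedGraph N₂) (h₃ : IsNestedGraph N₃)
    (κ₁ : N₁ ⥤ N₂) (κ₂ : N₂ ⥤ N₃)
    (hκ₁ : IsContraction κ₁) (hκ₂ : IsContraction κ₂) :
    IsContraction (κ₁ ⋙ κ₂) := by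
  refine ⟨hκ₁.1.comp hκ₂.1, hκ₁.2.1.comp hκ₂.2.1, fun A₃ => ?_⟩
  obtain ⟨A₂, ⟨rfl, hA₂⟩, huniq₂⟩ := hκ₂.2.2 A₃
  obtain ⟨A₁, ⟨rfl, hA₁⟩, huniq₁⟩ := hκ₁.2.2 A₂
  refine ⟨A₁, ⟨rfl, fun B f hf => hA₁ f (hA₂ _ hf)⟩, fun A hA => huniq₁ A ⟨?_, ?_⟩⟩
  · exact huniq₂ _ ⟨hA.1, hκ₁.isVertexOver_obj h₁ h₂ h₃ hA.2⟩
  · exact fun _ f hf => hA.2 f (IsId.map κ₂ hf)
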